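/- In every non-idempotent Kleene algebra with an effect subalgebra L with top element e, the partition-transform rule holds: for every finite partition (m_i)_{i∈I} and every family (a_i)_{i∈I} of elements of L, the elements ∑_{i∈I} m_i·a_i and ∑_{i∈I} m_i·¬a_i belong to L and ¬(∑_{i∈I} m_i·a_i) = ∑_{i∈I} m_i·¬a_i. -/

import Mathlib

/-!
The induction law for `1⋆` forces `0 ≤ r` for every `r`, so finite sums are monotone in the
index set. Hence a finite family of effects whose total sum is below `e` has all its partial
sums below `e`, and adding the terms one at a time stays inside the effect subalgebra
(`EffectSubalgebra.sum_mem`). For a partition, `m i * a i ≤ m i * e` gives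
`∑ i, m i * a i ≤ e`, and likewise for the negations, so both sums are effects. By
distributivity they add up to `∑ i, m i * e = e`, and uniqueness of negation concludes.
-/

/-- A non-idempotent Kleene algebra (NKA): a (not necessarily additively
idempotent) semiring equipped with a partial order preserved by `+` and `*`,
and a star operation satisfying `1 + p * p⋆ ≤ p⋆` and the two induction laws. -/
class NKA (K : Type*) extends Semiring K, PartialOrder K where
  star : K → K
  add_le_add' : ∀ {p q r s : K}, p ≤ q → r ≤ s → p + r ≤ q + s
  mul_le_mul' : ∀ {p q r s : K}, p ≤ q → r ≤ s → p * r ≤ q * s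
  one_add_mul_star_le : ∀ p : K, 1 + p * star p ≤ star p
  star_ind_left : ∀ {p q r : K}, q + p * r ≤ r → star p * q ≤ r
  star_ind_right : ∀ {p q r : K}, q + r * p ≤ r → q * star p ≤ r

postfix:max "⋆" => NKA.star

/-- An effect subalgebra of an NKA `K`: a subset `carrier` with top element
`e ∈ carrier`, containing `0`, bounded above by `e`, closed under sums that
stay below `e`, and equipped with a negation: for every `a ∈ carrier`,
`neg a` is the unique element of `carrier` with `a + neg a = e`. -/
structure EffectSubalgebra (K : Type*) [NKA K] where
  carrier : Set K
  e : K
  e_mem : e ∈ carrier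
  zero_mem : (0 : K) ∈ carrier
  le_e : ∀ a ∈ carrier, a ≤ e
  add_mem : ∀ {a b : K}, a ∈ carrier → b ∈ carrier → a + b ≤ e → a + b ∈ carrier
  neg : K → K
  neg_mem : ∀ {a : K}, a ∈ carrier → neg a ∈ carrier
  add_neg : ∀ {a : K}, a ∈ carrier → a + neg a = e
  neg_unique : ∀ {a b : K}, a ∈ carrier → b ∈ carrier → a + b = e → b = neg a

/-- The order is positive: `0 = 1⋆ * 0 ≤ r` by induction, since `0 + 1 * r ≤ r`. -/
theorem NKA.zero_le' {K : Type*} [NKA K] (r : K) : 0 ≤ r := by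
  have h : (1 : K)⋆ * 0 ≤ r := NKA.star_ind_left (by simp)
  simpa using h

theorem NKA.sum_le_sum' {K : Type*} [NKA K] {I : Type*} (s : Finset I) {f g : I → K}
    (h : ∀ i, f i ≤ g i) : ∑ i ∈ s, f i ≤ ∑ i ∈ s, g i := by
  classical
  induction s using Finset.induction_on with
  | empty => simp
  | insert i s hi ih =>
    rw [Finset.sum_insert hi, Finset.sum_insert hi]
    exact NKA.add_le_add' (h i) ih

/-- A finite sum of effects lying below `e` is an effect; positivity of the order bounds
the partial sums, which the binary closure property requires. -/
theorem EffectSubalgebra.sum_mem {K : Type*} [NKA K] (L : EffectSubalgebra K) {I : Type*}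
    (s : Finset I) {f : I → K} (hf : ∀ i, f i ∈ L.carrier) (hs : ∑ i ∈ s, f i ≤ L.e) :
    ∑ i ∈ s, f i ∈ L.carrier := by
  classical
  induction s using Finset.induction_on with
  | empty => simpa using L.zero_mem
  | insert i s hi ih =>
    rw [Finset.sum_insert hi] at hs ⊢
    have h : 0 + ∑ j ∈ s, f j ≤ f i + ∑ j ∈ s, f j :=
      NKA.add_le_add' (NKA.zero_le' _) le_rfl
    rw [zero_add] at h
    exact L.add_mem (hf i) (ih (h.trans hs)) hs

/-- Partition-transform rule: for a finite partition `(m i)` and a family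
`(a i)` of effects, `∑ i, m i * a i` and `∑ i, m i * ¬(a i)` are effects and
`¬(∑ i, m i * a i) = ∑ i, m i * ¬(a i)`. -/
theorem effect_partition_transform {K : Type*} [NKA K] (L : EffectSubalgebra K)
    {I : Type*} [Fintype I] (m : I → K)
    (hm : ∀ i, ∀ a ∈ L.carrier, m i * a ∈ L.carrier)
    (hpart : ∑ i, m i * L.e = L.e)
    (a : I → K) (ha : ∀ i, a i ∈ L.carrier) :
    (∑ i, m i * a i) ∈ L.carrier ∧ (∑ i, m i * L.neg (a i)) ∈ L.carrier ∧
      L.neg (∑ i, m i * a i) = ∑ i, m i * L.neg (a i) := by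
  have key : ∀ b : I → K, (∀ i, b i ∈ L.carrier) → (∑ i, m i * b i) ∈ L.carrier := by
    intro b hb
    refine L.sum_mem _ (fun i => hm i _ (hb i)) ?_
    calc ∑ i, m i * b i ≤ ∑ i, m i * L.e :=
          NKA.sum_le_sum' _ fun i => NKA.mul_le_mul' le_rfl (L.le_e _ (hb i))
      _ = L.e := hpart
  have h₁ := key a ha
  have h₂ := key (fun i => L.neg (a i)) fun i => L.neg_mem (ha i)
  refine ⟨h₁, h₂, (L.neg_unique h₁ h₂ ?_).symm⟩
  rw [← Finset.sum_add_distrib, ← hpart]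
  refine Finset.sum_congr rfl fun i _ => ?_
  rw [← mul_add, L.add_neg (ha i)]
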